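/- Let U be an irreducible complex representation of SL(2, F_8) of dimension 9, and let N be the subgroup of SL(2, F_8) consisting of the unipotent upper-triangular matrices with rows (1, a) and (0, 1) for a ∈ F_8. Then the restriction of U to N is isomorphic, as a representation of N, to the direct sum of the regular representation of N and the one-dimensional trivial representation. Equivalently, every nontrivial one-dimensional character of N occurs in U|_N with multiplicity 1, and the trivial character occurs with multiplicity 2. -/

import Mathlib

open Matrix

/-!
Every element of a finite field `F` of characteristic two is a square, so conjugating by diagonal
matrices shows that all nontrivial elements of the group `N` of upper unipotent matrices are
conjugate in `SL(2, F)`. A character of `SL(2, F)` is therefore constant on `N` away from the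
identity, that is, a combination of the regular and the trivial character of `N`: all nontrivial
linear characters of `N` occur with one and the same multiplicity `m`, and the trivial one with
multiplicity `d - (|F| - 1) m`, where `d` is the dimension. If `m = 0`, then `N` acts trivially, and
so does `SL(2, F)`, which is the normal closure of `N`. If `m ≥ 2`, then `d ≥ 2 (|F| - 1)`, which is
`14` for `|F| = 8`. Hence `m = 1` when `d = 9`.
-/

open Module Representation Matrix.SpecialLinearGroup
open scoped MatrixGroups

section WeightSpace

variable {k G V : Type*} [Field k] [Group G] [AddCommGroup V] [Module k V]

/-- The subspace of vectors on which every `g : G` acts by the scalar `χ g`. When `V` is semisimple,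
its dimension is the multiplicity of the linear character `χ` in `ρ`. -/
def weightSpace (ρ : Representation k G V) (χ : G →* kˣ) : Submodule k V :=
  ⨅ g : G, End.eigenspace (ρ g) (χ g : k)

theorem mem_weightSpace {ρ : Representation k G V} {χ : G →* kˣ} {v : V} :
    v ∈ weightSpace ρ χ ↔ ∀ g, ρ g v = (χ g : k) • v := by
  simp only [weightSpace, Submodule.mem_iInf, End.mem_eigenspace_iff]

theorem weightSpace_one_eq_top_iff {ρ : Representation k G V} :
    weightSpace ρ 1 = ⊤ ↔ ∀ g, ρ g = 1 := by
  simp [Submodule.eq_top_iff', mem_weightSpace, LinearMap.ext_iff, forall_comm (α := V)]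

/-- The tensor product of `ρ` with the inverse of the linear character `χ`, realized on the space of
`ρ`: it turns the weight space of `χ` into a space of invariants. -/
def twistInv (ρ : Representation k G V) (χ : G →* kˣ) : Representation k G V where
  toFun g := (χ g)⁻¹ • ρ g
  map_one' := by simp
  map_mul' g h := by simp only [map_mul, mul_inv, smul_mul_smul_comm]

theorem twistInv_apply (ρ : Representation k G V) (χ : G →* kˣ) (g : G) :
    twistInv ρ χ g = (χ g)⁻¹ • ρ g :=
  rfl

theorem invariants_twistInv (ρ : Representation k G V) (χ : G →* kˣ) :
    (twistInv ρ χ).invariants = weightSpace ρ χ := by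
  ext v
  rw [mem_invariants, mem_weightSpace]
  refine forall_congr' fun g ↦ ?_
  rw [twistInv_apply, LinearMap.smul_apply]
  exact inv_smul_eq_iff

theorem character_twistInv (ρ : Representation k G V) (χ : G →* kˣ) (g : G) :
    (twistInv ρ χ).character g = (χ g⁻¹ : k) * ρ.character g := by
  rw [character, twistInv_apply, Units.smul_def, map_smul, ← map_inv, smul_eq_mul, character]

variable [FiniteDimensional k V]

theorem card_mul_finrank_weightSpace [Fintype G] [NeZero (Nat.card G : k)]
    (ρ : Representation k G V) (χ : G →* kˣ) :
    (Nat.card G : k) * finrank k (weightSpace ρ χ) = ∑ g, (χ g⁻¹ : k) * ρ.character g := by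
  have hcard : (Nat.card G : k) ≠ 0 := NeZero.ne _
  have := invertibleOfNonzero hcard
  rw [← invariants_twistInv, ← card_inv_mul_sum_char_eq_finrank, mul_inv_cancel_left₀ hcard]
  simp only [character_twistInv]

theorem sum_units_coe_inv [Fintype G] (χ : G →* kˣ) [Decidable (χ = 1)] :
    ∑ g, (χ g⁻¹ : k) = if χ = 1 then (Nat.card G : k) else 0 := by
  have hχ : (Units.coeHom k).comp χ = 1 ↔ χ = 1 := by
    simp [DFunLike.ext_iff]
  classical
  calc ∑ g, (χ g⁻¹ : k) = ∑ g, (Units.coeHom k).comp χ g :=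
        Fintype.sum_equiv (Equiv.inv G) _ _ fun _ ↦ rfl
    _ = _ := by simp only [sum_hom_units, hχ, Nat.card_eq_fintype_card, Nat.cast_ite, Nat.cast_zero]

theorem card_mul_finrank_weightSpace_of_character_eq [Finite G] [NeZero (Nat.card G : k)]
    {ρ : Representation k G V} {x : k} (hx : ∀ g ≠ 1, ρ.character g = x)
    (χ : G →* kˣ) [Decidable (χ = 1)] :
    (Nat.card G : k) * finrank k (weightSpace ρ χ) =
      (finrank k V - x) + x * if χ = 1 then (Nat.card G : k) else 0 := by
  classical
  have := Fintype.ofFinite G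
  have hsplit (g : G) : (χ g⁻¹ : k) * ρ.character g =
      (if g = 1 then (finrank k V - x) else 0) + x * (χ g⁻¹ : k) := by
    split_ifs with hg
    · simp [hg]
    · rw [hx g hg]; ring
  rw [card_mul_finrank_weightSpace, Finset.sum_congr rfl fun g _ ↦ hsplit g,
    Finset.sum_add_distrib, ← Finset.mul_sum, sum_units_coe_inv, Fintype.sum_ite_eq']

theorem finrank_weightSpace_one_add_of_character_eq [Finite G] [CharZero k]
    {ρ : Representation k G V} {x : k} (hx : ∀ g ≠ 1, ρ.character g = x) {χ : G →* kˣ}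
    (hχ : χ ≠ 1) :
    finrank k (weightSpace ρ 1) + (Nat.card G - 1) * finrank k (weightSpace ρ χ) =
      finrank k V := by
  classical
  have hcard : (Nat.card G : k) ≠ 0 := NeZero.ne _
  have hone := card_mul_finrank_weightSpace_of_character_eq hx 1
  have hχx := card_mul_finrank_weightSpace_of_character_eq hx χ
  rw [if_pos rfl] at hone
  rw [if_neg hχ] at hχx
  have hdiff : (finrank k (weightSpace ρ 1) : k) - finrank k (weightSpace ρ χ) = x :=
    mul_left_cancel₀ hcard (by linear_combination hone - hχx)
  rw [← Nat.cast_inj (R := k), Nat.cast_add, Nat.cast_mul, Nat.cast_pred Nat.card_pos]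
  linear_combination hdiff + hχx

end WeightSpace

theorem finrank_eq_one_of_simple_of_isTrivial {k G : Type*} [Field k] [IsAlgClosed k] [Group G]
    (U : FDRep k G) [CategoryTheory.Simple U] [IsTrivial U.ρ] : finrank k U = 1 := by
  have : (linHom U.ρ U.ρ).IsTrivial :=
    ⟨fun g ↦ by ext; simp [linHom_apply, isTrivial_def (ρ := U.ρ)]⟩
  have hend : finrank k (linHom U.ρ U.ρ).invariants = 1 :=
    (linHom.invariantsEquivFDRepHom U U).finrank_eq.trans
      (CategoryTheory.finrank_endomorphism_simple_eq_one k U)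
  rw [invariants_eq_top, finrank_top, finrank_linearMap] at hend
  exact Nat.eq_one_of_mul_eq_one_left hend

theorem hasEnoughRootsOfUnity_two (k : Type*) [CommRing k] [IsDomain k] [NeZero (2 : k)] :
    HasEnoughRootsOfUnity k 2 where
  prim := ⟨-1, IsPrimitiveRoot.neg_one (ringChar k) fun h ↦ two_ne_zero (α := k) <| by
    exact_mod_cast (ringChar.spec k 2).2 h.dvd⟩
  cyc := inferInstance

theorem exists_monoidHom_multiplicative_units_ne_one (R k : Type*) [Ring R] [Nontrivial R]
    [Finite R] [CharP R 2] [CommRing k] [IsDomain k] [NeZero (2 : k)] :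
    ∃ χ : Multiplicative R →* kˣ, χ ≠ 1 := by
  have hexp : Monoid.exponent (Multiplicative R) ∣ 2 :=
    Monoid.exponent_dvd_of_forall_pow_eq_one fun a ↦ CharTwo.two_nsmul (R := R) a
  have := hasEnoughRootsOfUnity_two k
  have := HasEnoughRootsOfUnity.of_dvd k hexp
  obtain ⟨a, ha⟩ := exists_ne (1 : Multiplicative R)
  obtain ⟨χ, hχ⟩ := CommGroup.exists_apply_ne_one_of_hasEnoughRootsOfUnity (Multiplicative R) k ha
  exact ⟨χ, fun h ↦ hχ (by rw [h, MonoidHom.one_apply])⟩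

section Transvection

variable {ι R : Type*} [DecidableEq ι] [Fintype ι] [CommRing R] {i j : ι}

/-- The root subgroup of `SL(ι, R)` at `(i, j)`, as a homomorphism from the additive group of
`R`. -/
def transvectionHom (hij : i ≠ j) : Multiplicative R →* SpecialLinearGroup ι R where
  toFun a := transvection hij a.toAdd
  map_one' := transvection_coeff_zero hij
  map_mul' a b := transvection_add hij a.toAdd b.toAdd

theorem transvectionHom_injective (hij : i ≠ j) :
    Function.Injective (transvectionHom (R := R) hij) := by
  intro a b hab
  have hentry := congrArg (fun g : SpecialLinearGroup ι R ↦ g i j) hab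
  simpa [transvectionHom, transvection_coe, hij] using hentry

end Transvection

section UpperUnipotent

variable {R : Type*} [CommRing R]

theorem coe_transvection_zero_one (a : R) :
    ((transvection zero_ne_one a : SL(2, R)) : Matrix (Fin 2) (Fin 2) R) = !![1, a; 0, 1] := by
  ext i j
  fin_cases i <;> fin_cases j <;> simp [transvection_coe]

theorem coe_transvection_one_zero (a : R) :
    ((transvection one_ne_zero a : SL(2, R)) : Matrix (Fin 2) (Fin 2) R) = !![1, 0; a, 1] := by
  ext i j
  fin_cases i <;> fin_cases j <;> simp [transvection_coe]

theorem isConj_transvection_swap (a : R) :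
    IsConj (transvection zero_ne_one (-a) : SL(2, R)) (transvection one_ne_zero a) := by
  let w : SL(2, R) := ⟨!![0, 1; -1, 0], by simp⟩
  have hw : (w : Matrix (Fin 2) (Fin 2) R) = !![0, 1; -1, 0] := rfl
  refine isConj_iff.2 ⟨w, mul_inv_eq_iff_eq_mul.2 (Subtype.ext ?_)⟩
  rw [coe_mul, coe_mul, coe_transvection_zero_one, coe_transvection_one_zero, hw]
  simp

variable (R) in
/-- The subgroup of `SL(2, R)` of matrices with rows `(1, a)` and `(0, 1)`. -/
def upperUnipotent : Subgroup SL(2, R) :=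
  (transvectionHom zero_ne_one).range

theorem mem_upperUnipotent_iff_transvection {g : SL(2, R)} :
    g ∈ upperUnipotent R ↔ ∃ a : R, transvection zero_ne_one a = g :=
  Iff.rfl

theorem mem_upperUnipotent_iff {g : SL(2, R)} :
    g ∈ upperUnipotent R ↔ ∃ a : R, (g : Matrix (Fin 2) (Fin 2) R) = !![1, a; 0, 1] := by
  simp only [mem_upperUnipotent_iff_transvection, ← coe_transvection_zero_one]
  exact exists_congr fun a ↦ eq_comm.trans Subtype.ext_iff

variable (R) in
/-- The upper unipotent group of `SL(2, R)` is the additive group of `R`. -/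
noncomputable def upperUnipotentEquiv : Multiplicative R ≃* upperUnipotent R :=
  MonoidHom.ofInjective (transvectionHom_injective zero_ne_one)

theorem card_upperUnipotent : Nat.card (upperUnipotent R) = Nat.card R :=
  (Nat.card_congr (Multiplicative.ofAdd.trans (upperUnipotentEquiv R).toEquiv)).symm

end UpperUnipotent

section SL2

variable {F : Type*} [Field F]

theorem diag2_conj_transvection {t : F} (ht : t ≠ 0) (a : F) :
    diag2 t ht * transvection zero_ne_one a * (diag2 t ht)⁻¹ =
      transvection zero_ne_one (t * t * a) := by
  refine mul_inv_eq_iff_eq_mul.2 (Subtype.ext ?_)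
  rw [coe_mul, coe_mul, coe_transvection_zero_one, coe_transvection_zero_one, diag2_coe']
  simp [mul_right_comm t t a, ht]

theorem isConj_transvection_of_isSquare {a : F} (ha : a ≠ 0) (hsq : IsSquare a) :
    IsConj (transvection zero_ne_one 1 : SL(2, F)) (transvection zero_ne_one a) := by
  obtain ⟨t, rfl⟩ := hsq
  refine isConj_iff.2 ⟨diag2 t (left_ne_zero_of_mul ha), ?_⟩
  rw [diag2_conj_transvection, mul_one]

theorem eq_top_of_transvection_mem (K : Subgroup SL(2, F)) [hK : K.Normal]
    (h : ∀ a : F, transvection zero_ne_one a ∈ K) : K = ⊤ := by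
  refine (Subgroup.eq_top_iff' K).2 (SL2.transvection_induction _ ?_ fun _ _ ↦ K.mul_mem)
  intro i j hij a
  fin_cases i <;> fin_cases j
  · exact absurd rfl hij
  · exact h a
  · obtain ⟨w, hw⟩ := isConj_iff.1 (isConj_transvection_swap a)
    exact hw ▸ hK.conj_mem _ (h (-a)) w
  · exact absurd rfl hij

variable {k V : Type*} [Field k] [AddCommGroup V] [Module k V] {ρ : Representation k SL(2, F) V}

theorem isTrivial_of_weightSpace_upperUnipotent_one_eq_top
    (h : weightSpace (ρ.comp (upperUnipotent F).subtype) 1 = ⊤) : ρ.IsTrivial := by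
  have hker : ρ.ker = ⊤ := eq_top_of_transvection_mem _ fun a ↦
    weightSpace_one_eq_top_iff.1 h
      ⟨_, mem_upperUnipotent_iff_transvection.2 ⟨a, rfl⟩⟩
  exact ⟨fun g ↦ MonoidHom.mem_ker.1 (hker ▸ Subgroup.mem_top g)⟩

variable [Finite F] [CharP F 2]

theorem character_upperUnipotent_eq {g : upperUnipotent F} (hg : g ≠ 1) :
    character (ρ.comp (upperUnipotent F).subtype) g =
      ρ.character (transvection zero_ne_one 1) := by
  obtain ⟨_, hmem⟩ := g
  obtain ⟨a, rfl⟩ := mem_upperUnipotent_iff_transvection.1 hmem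
  have ha : a ≠ 0 := by
    rintro rfl
    exact hg (Subtype.ext (transvection_coeff_zero zero_ne_one))
  have hsq : IsSquare a := FiniteField.isSquare_of_char_two (ringChar.eq F 2) a
  obtain ⟨t, ht⟩ := isConj_iff.1 (isConj_transvection_of_isSquare ha hsq)
  exact (congrArg ρ.character ht.symm).trans (char_conj ρ _ t)

variable (F k) in
theorem exists_upperUnipotent_character_ne_one [NeZero (2 : k)] :
    ∃ χ : upperUnipotent F →* kˣ, χ ≠ 1 := by
  obtain ⟨χ, hχ⟩ := exists_monoidHom_multiplicative_units_ne_one F k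
  refine ⟨χ.comp (upperUnipotentEquiv F).symm.toMonoidHom, fun h ↦ hχ ?_⟩
  ext a
  simpa using congrArg Units.val (DFunLike.congr_fun h (upperUnipotentEquiv F (.ofAdd a)))

variable [CharZero k] [FiniteDimensional k V]

theorem finrank_weightSpace_upperUnipotent_one_add (ρ : Representation k SL(2, F) V)
    {χ : upperUnipotent F →* kˣ} (hχ : χ ≠ 1) :
    finrank k (weightSpace (ρ.comp (upperUnipotent F).subtype) 1) +
      (Nat.card F - 1) * finrank k (weightSpace (ρ.comp (upperUnipotent F).subtype) χ) =
      finrank k V := by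
  rw [← card_upperUnipotent]
  exact finrank_weightSpace_one_add_of_character_eq (fun _ ↦ character_upperUnipotent_eq) hχ

theorem finrank_weightSpace_upperUnipotent_eq_one (hρ : ¬ ρ.IsTrivial)
    (hdim : finrank k V < 2 * (Nat.card F - 1)) {χ : upperUnipotent F →* kˣ} (hχ : χ ≠ 1) :
    finrank k (weightSpace (ρ.comp (upperUnipotent F).subtype) χ) = 1 := by
  have hsum := finrank_weightSpace_upperUnipotent_one_add ρ hχ
  have hpos : finrank k (weightSpace (ρ.comp (upperUnipotent F).subtype) χ) ≠ 0 := by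
    intro hzero
    rw [hzero, mul_zero, add_zero] at hsum
    exact hρ (isTrivial_of_weightSpace_upperUnipotent_one_eq_top
      (Submodule.eq_top_of_finrank_eq hsum))
  have hlt : finrank k (weightSpace (ρ.comp (upperUnipotent F).subtype) χ) < 2 := by
    by_contra! hge
    have := Nat.mul_le_mul_left (Nat.card F - 1) hge
    omega
  omega

end SL2

theorem restriction_to_unipotent_subgroup_regular_plus_trivial_general
    {F k V : Type*} [Field F] [Finite F] [CharP F 2] [Field k] [CharZero k] [AddCommGroup V]
    [Module k V] [FiniteDimensional k V] {ρ : Representation k SL(2, F) V} (hρ : ¬ ρ.IsTrivial)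
    (hdim : finrank k V < 2 * (Nat.card F - 1)) (χ : upperUnipotent F →* kˣ) :
    (χ = 1 → finrank k (weightSpace (ρ.comp (upperUnipotent F).subtype) χ) + (Nat.card F - 1) =
      finrank k V) ∧
    (χ ≠ 1 → finrank k (weightSpace (ρ.comp (upperUnipotent F).subtype) χ) = 1) := by
  refine ⟨?_, finrank_weightSpace_upperUnipotent_eq_one hρ hdim⟩
  rintro rfl
  obtain ⟨ψ, hψ⟩ := exists_upperUnipotent_character_ne_one F k
  have hsum := finrank_weightSpace_upperUnipotent_one_add ρ hψ
  rwa [finrank_weightSpace_upperUnipotent_eq_one hρ hdim hψ, mul_one] at hsum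

/-- Let U be an irreducible 9-dimensional complex representation of SL(2, F_8), and N
the subgroup of unipotent upper-triangular matrices. Then in the restriction of U to N,
the trivial character of N occurs with multiplicity 2 and every nontrivial
one-dimensional character occurs with multiplicity 1 (i.e. U|_N is the direct sum of
the regular representation of N and the trivial one). -/
theorem restriction_to_unipotent_subgroup_regular_plus_trivial
    (U : FDRep ℂ (Matrix.SpecialLinearGroup (Fin 2) (GaloisField 2 3)))
    [CategoryTheory.Simple U]
    (hdim : Module.finrank ℂ U = 9)
    (N : Subgroup (Matrix.SpecialLinearGroup (Fin 2) (GaloisField 2 3)))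
    (hN : ∀ g : Matrix.SpecialLinearGroup (Fin 2) (GaloisField 2 3),
      g ∈ N ↔ ∃ a : GaloisField 2 3,
        (g : Matrix (Fin 2) (Fin 2) (GaloisField 2 3)) = !![1, a; 0, 1])
    (lam : N →* ℂˣ) :
    (lam = 1 →
      Module.finrank ℂ ↥
        (⨅ n : N, Module.End.eigenspace (U.ρ (n : Matrix.SpecialLinearGroup (Fin 2)
          (GaloisField 2 3))) (lam n : ℂ)) = 2) ∧
    (lam ≠ 1 →
      Module.finrank ℂ ↥
        (⨅ n : N, Module.End.eigenspace (U.ρ (n : Matrix.SpecialLinearGroup (Fin 2)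
          (GaloisField 2 3))) (lam n : ℂ)) = 1) := by
  obtain rfl : N = upperUnipotent _ := by
    ext g
    rw [hN, mem_upperUnipotent_iff]
  have hcard : Nat.card (GaloisField 2 3) = 8 := GaloisField.card 2 3 three_ne_zero
  have hU : ¬ Representation.IsTrivial U.ρ := fun _ ↦ by
    have := finrank_eq_one_of_simple_of_isTrivial U
    omega
  have hlam := restriction_to_unipotent_subgroup_regular_plus_trivial_general hU
    (by rw [hdim, hcard]; norm_num) lam
  rw [hcard, hdim] at hlam
  exact ⟨fun h ↦ Nat.add_right_cancel (hlam.1 h), hlam.2⟩
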